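/- Let W_1s be a finitely-valued random variable, X1^n a finitely-valued random sequence jointly distributed with W_1s, and let Y1^n and T^n be generated from X1^n by memoryless channels p(y1|x1) and Vhat2(t|x1) applied componentwise (conditionally independent of everything else given X1^n). Then there exist a finite-valued random variable W jointly distributed with single letters (X1, Y1, T) whose joint law factors as p(w, x1, y1, t) = p(w) p(x1|w) p(y1|x1) Vhat2(t|x1), and a number gamma >= 0, such that (1/n) H(T^n | W_1s) = H(T|W) + gamma and (1/n) H(Y1^n | W_1s) = H(Y1|W) + gamma. (Explicitly, W may be taken as W = (W_Q, Q) with W_i = (Y1^{i-1}, T_{i+1},...,T_n, W_1s), Q uniform on {1,...,n} independent of everything else, X1 = X_{1Q}, Y1 = Y_{1Q}, T = T_Q.) -/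

import Mathlib

open Finset Real Filter
open scoped Classical

namespace Paper

/-- `p` is a probability mass function on the finite type `α`. -/
def IsPMF {α : Type*} [Fintype α] (p : α → ℝ) : Prop :=
  (∀ a, 0 ≤ p a) ∧ ∑ a, p a = 1

/-- `k` is a transition probability (channel) from `α` to the finite type `β`. -/
def IsKernel {α β : Type*} [Fintype β] (k : α → β → ℝ) : Prop :=
  ∀ a, IsPMF (k a)

variable {Ω : Type*} [Fintype Ω]

/-- Probability that the random variable `X` takes the value `x`, under the weight `p`. -/
noncomputable def pr {α : Type*} (p : Ω → ℝ) (X : Ω → α) (x : α) : ℝ :=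
  ∑ ω, if X ω = x then p ω else 0

/-- Shannon entropy (base 2) of the random variable `X` under `p`. -/
noncomputable def ent {α : Type*} [Fintype α] (p : Ω → ℝ) (X : Ω → α) : ℝ :=
  ∑ x, -(pr p X x * Real.logb 2 (pr p X x))

/-- Conditional entropy `H(X|Y) = H(X,Y) - H(Y)`. -/
noncomputable def condEnt {α β : Type*} [Fintype α] [Fintype β]
    (p : Ω → ℝ) (X : Ω → α) (Y : Ω → β) : ℝ :=
  ent p (fun ω => (X ω, Y ω)) - ent p Y

/-- Mutual information `I(X;Y) = H(X) + H(Y) - H(X,Y)`. -/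
noncomputable def mi {α β : Type*} [Fintype α] [Fintype β]
    (p : Ω → ℝ) (X : Ω → α) (Y : Ω → β) : ℝ :=
  ent p X + ent p Y - ent p (fun ω => (X ω, Y ω))

/-- Conditional mutual information `I(X;Y|Z) = H(X,Z) + H(Y,Z) - H(X,Y,Z) - H(Z)`. -/
noncomputable def cmi {α β γ : Type*} [Fintype α] [Fintype β] [Fintype γ]
    (p : Ω → ℝ) (X : Ω → α) (Y : Ω → β) (Z : Ω → γ) : ℝ :=
  ent p (fun ω => (X ω, Z ω)) + ent p (fun ω => (Y ω, Z ω))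
    - ent p (fun ω => (X ω, Y ω, Z ω)) - ent p Z

/-- The Markov chain `A → B → C`: `A` and `C` are conditionally independent given `B`. -/
def MarkovChain {α β γ : Type*} (p : Ω → ℝ) (A : Ω → α) (B : Ω → β) (C : Ω → γ) : Prop :=
  ∀ a b c, pr p (fun ω => (A ω, B ω, C ω)) (a, b, c) * pr p B b =
    pr p (fun ω => (A ω, B ω)) (a, b) * pr p (fun ω => (B ω, C ω)) (b, c)

/-! ## Statement 15: single-letterization with a common slack `γ`
(equations (122)–(127) of the paper). -/

section Stmt15

variable {X1 Y1 T Wt : Type} [Fintype X1] [Fintype Y1] [Fintype T] [Fintype Wt]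

/-- Joint law of `(W_1s, X_1^n, Y_1^n, T^n)` where `Y_1^n` and `T^n` are the outputs of
the memoryless channels `p(y_1|x_1)` and `Vhat2(t|x_1)` applied componentwise to `X_1^n`. -/
noncomputable def jointYT (ch1 : X1 → Y1 → ℝ) (v2 : X1 → T → ℝ) (n : ℕ)
    (μ : Wt × (Fin n → X1) → ℝ) :
    Wt × (Fin n → X1) × (Fin n → Y1) × (Fin n → T) → ℝ :=
  fun (w, x1, y1, t) =>
    μ (w, x1) * (∏ i, ch1 (x1 i) (y1 i)) * ∏ i, v2 (x1 i) (t i)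

/-! Write `W_i = (Y^{i-1}, T_{i+1}, …, T_n, W)`. The sum over `i` of `H(T_i|W_i) - H(Y_i|W_i)` is a
telescoping sum of `H(Y^{i-1}, T_i, …, T_n, W) - H(Y^i, T_{i+1}, …, T_n, W)`, so it equals
`H(T^n|W) - H(Y^n|W)`: the slacks `H(T^n|W) - ∑ H(T_i|W_i)` and `H(Y^n|W) - ∑ H(Y_i|W_i)` coincide.
The first is nonnegative by the chain rule, since conditioning on `Y^{i-1}` as well can only lower
the entropy of `T_i`. Averaging over a uniform index `Q` turns the sums into conditional entropies
given `(W_Q, Q)`, and given `X_i` the outputs `(Y_i, T_i)` are independent of `W_i`. -/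

section RandomVariables

variable {α β : Type*}

lemma pr_nonneg {p : Ω → ℝ} (hp : ∀ ω, 0 ≤ p ω) (X : Ω → α) (x : α) : 0 ≤ pr p X x :=
  Finset.sum_nonneg fun ω _ => by split_ifs <;> simp [hp ω]

lemma sum_pr_mul [Fintype α] (p : Ω → ℝ) (X : Ω → α) (g : α → ℝ) :
    ∑ x, pr p X x * g x = ∑ ω, p ω * g (X ω) := by
  simp only [pr, Finset.sum_mul, ite_mul, zero_mul]
  rw [Finset.sum_comm]
  simp

lemma sum_pr [Fintype α] (p : Ω → ℝ) (X : Ω → α) : ∑ x, pr p X x = ∑ ω, p ω := by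
  simpa using sum_pr_mul p X fun _ => 1

lemma isPMF_pr [Fintype α] {p : Ω → ℝ} (hp : IsPMF p) (X : Ω → α) : IsPMF (pr p X) :=
  ⟨pr_nonneg hp.1 X, (sum_pr p X).trans hp.2⟩

lemma pr_pr [Fintype α] (p : Ω → ℝ) (X : Ω → α) (f : α → β) :
    pr (pr p X) f = pr p fun ω => f (X ω) := by
  funext b
  simpa [pr] using sum_pr_mul p X fun x => if f x = b then 1 else 0

lemma pr_apply_of_injective (p : Ω → ℝ) {X : Ω → α} (hX : Function.Injective X) (ω : Ω) :
    pr p X (X ω) = p ω := by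
  simp [pr, hX.eq_iff]

lemma sum_pr_fst [Fintype α] (p : Ω → ℝ) (X : Ω → α) (Y : Ω → β) (y : β) :
    ∑ x, pr p (fun ω => (X ω, Y ω)) (x, y) = pr p Y y := by
  simp only [pr, Prod.mk.injEq, ite_and]
  rw [Finset.sum_comm]
  simp

lemma sum_pr_snd [Fintype β] (p : Ω → ℝ) (X : Ω → α) (Y : Ω → β) (x : α) :
    ∑ y, pr p (fun ω => (X ω, Y ω)) (x, y) = pr p X x := by
  simp only [pr, Prod.mk.injEq, ite_and]
  rw [Finset.sum_comm]
  simp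

lemma le_pr_apply {p : Ω → ℝ} (hp : ∀ ω, 0 ≤ p ω) (X : Ω → α) (ω : Ω) : p ω ≤ pr p X (X ω) := by
  have h := Finset.single_le_sum (f := fun ω' => if X ω' = X ω then p ω' else 0)
    (fun ω' _ => by split_ifs <;> simp [hp ω']) (Finset.mem_univ ω)
  simpa only [pr, if_true] using h

lemma exists_of_pr_ne_zero {p : Ω → ℝ} {X : Ω → α} {x : α} (h : pr p X x ≠ 0) :
    ∃ ω, X ω = x ∧ p ω ≠ 0 := by
  obtain ⟨ω, -, hω⟩ := Finset.exists_ne_zero_of_sum_ne_zero h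
  exact ⟨ω, by simpa only [ne_eq, ite_eq_right_iff, Classical.not_imp, exists_prop] using hω⟩

lemma IsPMF.nonempty {p : Ω → ℝ} (hp : IsPMF p) : Nonempty Ω := by
  by_contra h
  rw [not_nonempty_iff] at h
  simpa using hp.2

lemma exists_isKernel_pr_eq_mul [Fintype β] [Nonempty β] {p : Ω → ℝ} (hp : ∀ ω, 0 ≤ p ω)
    (X : Ω → α) (Y : Ω → β) :
    ∃ k : α → β → ℝ, IsKernel k ∧
      ∀ x y, pr p (fun ω => (X ω, Y ω)) (x, y) = pr p X x * k x y := by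
  have joint_nonneg : ∀ x y, 0 ≤ pr p (fun ω => (X ω, Y ω)) (x, y) := fun x y =>
    pr_nonneg hp _ _
  suffices h : ∀ x, ∃ q : β → ℝ, IsPMF q ∧
      ∀ y, pr p (fun ω => (X ω, Y ω)) (x, y) = pr p X x * q y by
    choose k hk hmul using h
    exact ⟨k, hk, hmul⟩
  intro x
  by_cases hx : pr p X x = 0
  · have joint_eq_zero : ∀ y, pr p (fun ω => (X ω, Y ω)) (x, y) = 0 := by
      have hsum := (sum_pr_snd p X Y x).trans hx
      rw [Finset.sum_eq_zero_iff_of_nonneg fun y _ => joint_nonneg x y] at hsum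
      simpa using hsum
    let y₀ := Classical.arbitrary β
    exact ⟨Pi.single y₀ 1, ⟨fun y => by by_cases h : y = y₀ <;> simp [h], by simp⟩,
      fun y => by simp [hx, joint_eq_zero]⟩
  · refine ⟨fun y => pr p (fun ω => (X ω, Y ω)) (x, y) / pr p X x,
      ⟨fun y => div_nonneg (joint_nonneg x y) (pr_nonneg hp X x), ?_⟩,
      fun y => (mul_div_cancel₀ _ hx).symm⟩
    rw [← Finset.sum_div, sum_pr_snd, div_self hx]

end RandomVariables

section Entropy

variable {α β γ : Type*}

lemma ent_eq_sum_outcomes [Fintype α] (p : Ω → ℝ) (X : Ω → α) :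
    ent p X = ∑ ω, p ω * -Real.logb 2 (pr p X (X ω)) := by
  simp only [ent, ← mul_neg, sum_pr_mul p X fun x => -Real.logb 2 (pr p X x)]

lemma ent_congr [Fintype α] [Fintype β] (p : Ω → ℝ) {X : Ω → α} {Y : Ω → β}
    (h : ∀ ω ω', X ω = X ω' ↔ Y ω = Y ω') : ent p X = ent p Y := by
  simp only [ent_eq_sum_outcomes, pr, h]

lemma condEnt_comp_injective [Fintype α] [Fintype β] [Fintype γ] (p : Ω → ℝ) (X : Ω → α)
    (Y : Ω → β) {f : β → γ} (hf : Function.Injective f) :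
    condEnt p X (fun ω => f (Y ω)) = condEnt p X Y := by
  unfold condEnt
  rw [ent_congr p (X := fun ω => f (Y ω)) (Y := Y) fun _ _ => hf.eq_iff,
    ent_congr p (X := fun ω => (X ω, f (Y ω))) (Y := fun ω => (X ω, Y ω)) fun _ _ => by
      simp only [Prod.mk.injEq, hf.eq_iff]]

lemma condEnt_pr [Fintype α] [Fintype β] [Fintype γ] (p : Ω → ℝ) (Z : Ω → α) (f : α → β)
    (g : α → γ) :
    condEnt (pr p Z) f g = condEnt p (fun ω => f (Z ω)) fun ω => g (Z ω) := by
  simp only [condEnt, ent, pr_pr]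

lemma sub_le_mul_log_sub_log {a b : ℝ} (ha : 0 ≤ a) (hb : 0 ≤ b) (h : b = 0 → a = 0) :
    a - b ≤ a * (Real.log a - Real.log b) := by
  rcases ha.eq_or_lt with rfl | ha
  · simpa using hb
  have hb : 0 < b := hb.lt_of_ne fun hb => ha.ne' (h hb.symm)
  have hlog : 1 - (a / b)⁻¹ ≤ Real.log (a / b) := Real.one_sub_inv_le_log_of_pos (by positivity)
  rw [Real.log_div ha.ne' hb.ne', inv_div] at hlog
  calc a - b = a * (1 - b / a) := by field_simp
    _ ≤ a * (Real.log a - Real.log b) := mul_le_mul_of_nonneg_left hlog ha.le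

lemma sum_mul_logb_sub_logb_nonneg {ι : Type*} {s : Finset ι} {a b : ι → ℝ}
    (ha : ∀ i ∈ s, 0 ≤ a i) (hb : ∀ i ∈ s, 0 ≤ b i) (h : ∀ i ∈ s, b i = 0 → a i = 0)
    (hsum : ∑ i ∈ s, b i ≤ ∑ i ∈ s, a i) :
    0 ≤ ∑ i ∈ s, a i * (Real.logb 2 (a i) - Real.logb 2 (b i)) := by
  have hlog : 0 ≤ ∑ i ∈ s, a i * (Real.log (a i) - Real.log (b i)) := by
    calc 0 ≤ ∑ i ∈ s, (a i - b i) := by rw [Finset.sum_sub_distrib]; linarith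
      _ ≤ _ := Finset.sum_le_sum fun i hi =>
        sub_le_mul_log_sub_log (ha i hi) (hb i hi) (h i hi)
  simp only [Real.logb, ← sub_div, ← mul_div_assoc, ← Finset.sum_div]
  exact div_nonneg hlog (Real.log_nonneg one_le_two)

lemma sum_pr_mul_pr_div_pr [Fintype α] [Fintype β] [Fintype γ] (p : Ω → ℝ) (X : Ω → α)
    (Y : Ω → β) (Z : Ω → γ) :
    ∑ v : α × β × γ, pr p (fun ω => (X ω, Z ω)) (v.1, v.2.2) *
      pr p (fun ω => (Y ω, Z ω)) v.2 / pr p Z v.2.2 = ∑ ω, p ω := by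
  calc _ = ∑ z, (∑ x, pr p (fun ω => (X ω, Z ω)) (x, z)) *
        (∑ y, pr p (fun ω => (Y ω, Z ω)) (y, z)) / pr p Z z := by
        simp only [Fintype.sum_prod_type, Finset.sum_mul_sum, Finset.sum_div]
        rw [Finset.sum_congr rfl fun x _ => Finset.sum_comm, Finset.sum_comm]
    _ = ∑ z, pr p Z z := by simp only [sum_pr_fst, mul_self_div_self]
    _ = _ := sum_pr p Z

-- Gibbs' inequality for the law of `(X, Y, Z)` against `p(x, z) p(y, z) / p(z)`.
lemma cmi_nonneg [Fintype α] [Fintype β] [Fintype γ] {p : Ω → ℝ} (hp : ∀ ω, 0 ≤ p ω)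
    (X : Ω → α) (Y : Ω → β) (Z : Ω → γ) : 0 ≤ cmi p X Y Z := by
  let V : Ω → α × β × γ := fun ω => (X ω, Y ω, Z ω)
  let b : α × β × γ → ℝ := fun v => pr p (fun ω => (X ω, Z ω)) (v.1, v.2.2) *
    pr p (fun ω => (Y ω, Z ω)) v.2 / pr p Z v.2.2
  have b_pos : ∀ ω, 0 < p ω → 0 < b (V ω) := fun ω hω =>
    div_pos (mul_pos (hω.trans_le (le_pr_apply hp (fun ω => (X ω, Z ω)) ω))
      (hω.trans_le (le_pr_apply hp (fun ω => (Y ω, Z ω)) ω))) (hω.trans_le (le_pr_apply hp Z ω))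
  have pr_eq_zero : ∀ v, b v = 0 → pr p V v = 0 := fun v hv => by
    by_contra hne
    obtain ⟨ω, rfl, hω⟩ := exists_of_pr_ne_zero hne
    exact (b_pos ω ((hp ω).lt_of_ne hω.symm)).ne' hv
  have gibbs : 0 ≤ ∑ v, pr p V v * (Real.logb 2 (pr p V v) - Real.logb 2 (b v)) :=
    sum_mul_logb_sub_logb_nonneg (fun v _ => pr_nonneg hp V v)
      (fun v _ => div_nonneg (mul_nonneg (pr_nonneg hp _ _) (pr_nonneg hp _ _))
        (pr_nonneg hp _ _))
      (fun v _ => pr_eq_zero v) ((sum_pr_mul_pr_div_pr p X Y Z).trans (sum_pr p V).symm).le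
  rw [sum_pr_mul p V fun v => Real.logb 2 (pr p V v) - Real.logb 2 (b v)] at gibbs
  refine gibbs.trans_eq ?_
  simp only [cmi, ent_eq_sum_outcomes, ← Finset.sum_add_distrib, ← Finset.sum_sub_distrib]
  refine Finset.sum_congr rfl fun ω _ => ?_
  rcases (hp ω).eq_or_lt with hω | hω
  · simp [← hω]
  have hXZ := hω.trans_le (le_pr_apply hp (fun ω => (X ω, Z ω)) ω)
  have hYZ := hω.trans_le (le_pr_apply hp (fun ω => (Y ω, Z ω)) ω)
  have hZ := hω.trans_le (le_pr_apply hp Z ω)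
  simp only [b, V]
  rw [Real.logb_div (mul_pos hXZ hYZ).ne' hZ.ne', Real.logb_mul hXZ.ne' hYZ.ne']
  ring

lemma condEnt_le_condEnt_of_factorsThrough [Fintype α] [Fintype β] [Fintype γ] {p : Ω → ℝ}
    (hp : ∀ ω, 0 ≤ p ω) (X : Ω → α) {Y : Ω → β} {Z : Ω → γ} (h : Z.FactorsThrough Y) :
    condEnt p X Y ≤ condEnt p X Z := by
  have hYZ : ent p (fun ω => (Y ω, Z ω)) = ent p Y := ent_congr p fun ω ω' => by
    simpa using @h ω ω'
  have hXYZ : ent p (fun ω => (X ω, Y ω, Z ω)) = ent p fun ω => (X ω, Y ω) :=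
    ent_congr p fun ω ω' => by simpa using fun _ => @h ω ω'
  have hcmi := cmi_nonneg hp X Y Z
  simp only [cmi, hYZ, hXYZ] at hcmi
  simp only [condEnt]
  linarith

end Entropy

section CsiszarSum

/-- The random variable `(W, (Y_j)_{j ∈ s}, (T_j)_{j ∈ t})`. The paper's
`W_i = (Y^{i-1}, T_{i+1}, …, T_n, W)` is the case `s = Iio i`, `t = Ioi i`. -/
def partialObs {Θ ι δ β τ : Type*} (W : Θ → δ) (Y : Θ → ι → β) (T : Θ → ι → τ) (s t : Finset ι)
    (ω : Θ) : δ × (s → β) × (t → τ) :=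
  (W ω, s.restrict (Y ω), t.restrict (T ω))

lemma partialObs_eq_iff {Θ ι δ β τ : Type*} {W : Θ → δ} {Y : Θ → ι → β} {T : Θ → ι → τ}
    {s t : Finset ι} {ω ω' : Θ} :
    partialObs W Y T s t ω = partialObs W Y T s t ω' ↔
      W ω = W ω' ∧ (∀ j ∈ s, Y ω j = Y ω' j) ∧ ∀ j ∈ t, T ω j = T ω' j := by
  simp [partialObs, funext_iff]

variable {n : ℕ} {ι δ β τ : Type*} [DecidableEq ι] [Fintype δ] [Fintype β] [Fintype τ]

lemma condEnt_left_partialObs (p : Ω → ℝ) (W : Ω → δ) (Y : Ω → ι → β) (T : Ω → ι → τ)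
    {s s' : Finset ι} {i : ι} (hs : insert i s = s') (t : Finset ι) :
    condEnt p (fun ω => Y ω i) (partialObs W Y T s t) =
      ent p (partialObs W Y T s' t) - ent p (partialObs W Y T s t) := by
  subst hs
  refine congrArg (· - _) (ent_congr p fun ω ω' => ?_)
  simp only [Prod.mk.injEq, partialObs_eq_iff, Finset.forall_mem_insert]
  tauto

lemma condEnt_right_partialObs (p : Ω → ℝ) (W : Ω → δ) (Y : Ω → ι → β) (T : Ω → ι → τ)
    (s : Finset ι) {t t' : Finset ι} {i : ι} (ht : insert i t = t') :
    condEnt p (fun ω => T ω i) (partialObs W Y T s t) =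
      ent p (partialObs W Y T s t') - ent p (partialObs W Y T s t) := by
  subst ht
  refine congrArg (· - _) (ent_congr p fun ω ω' => ?_)
  simp only [Prod.mk.injEq, partialObs_eq_iff, Finset.forall_mem_insert]
  tauto

lemma condEnt_left_eq_sub [Fintype ι] (p : Ω → ℝ) (W : Ω → δ) (Y : Ω → ι → β) (T : Ω → ι → τ) :
    condEnt p Y W = ent p (partialObs W Y T univ ∅) - ent p (partialObs W Y T ∅ ∅) := by
  refine congrArg₂ (· - ·) (ent_congr p fun ω ω' => ?_) (ent_congr p fun ω ω' => ?_)
  · simp [partialObs_eq_iff, funext_iff, and_comm]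
  · simp [partialObs_eq_iff]

lemma condEnt_right_eq_sub [Fintype ι] (p : Ω → ℝ) (W : Ω → δ) (Y : Ω → ι → β) (T : Ω → ι → τ) :
    condEnt p T W = ent p (partialObs W Y T ∅ univ) - ent p (partialObs W Y T ∅ ∅) := by
  refine congrArg₂ (· - ·) (ent_congr p fun ω ω' => ?_) (ent_congr p fun ω ω' => ?_)
  · simp [partialObs_eq_iff, funext_iff, and_comm]
  · simp [partialObs_eq_iff]

lemma sum_cut_sub_cut (F : Finset (Fin n) → Finset (Fin n) → ℝ) :
    ∑ i, (F (Iio i) (Ici i) - F (Iic i) (Ioi i)) = F ∅ univ - F univ ∅ := by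
  let Φ : ℕ → ℝ := fun k => F {j | j.val < k} {j | k ≤ j.val}
  have hΦ : ∀ i : Fin n, F (Iio i) (Ici i) - F (Iic i) (Ioi i) = Φ i - Φ (i + 1) := fun i => by
    congr 2 <;> ext j <;> simp
  calc _ = ∑ i : Fin n, (Φ i - Φ (i + 1)) := Finset.sum_congr rfl fun i _ => hΦ i
    _ = Φ 0 - Φ n := by
      rw [Fin.sum_univ_eq_sum_range (fun k => Φ k - Φ (k + 1)), Finset.sum_range_sub']
    _ = F ∅ univ - F univ ∅ := by
      have hn : ({j | n ≤ j.val} : Finset (Fin n)) = ∅ := by simp [Finset.filter_eq_empty_iff]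
      simp [Φ, hn]

-- Csiszár's sum identity: both sides differ by the telescoping sum over the cut points.
lemma condEnt_sub_sum_condEnt_eq (p : Ω → ℝ) (W : Ω → δ) (Y : Ω → Fin n → β)
    (T : Ω → Fin n → τ) :
    condEnt p T W - ∑ i, condEnt p (fun ω => T ω i) (partialObs W Y T (Iio i) (Ioi i)) =
      condEnt p Y W - ∑ i, condEnt p (fun ω => Y ω i) (partialObs W Y T (Iio i) (Ioi i)) := by
  have h := sum_cut_sub_cut fun s t => ent p (partialObs W Y T s t)
  simp only [fun i => condEnt_left_partialObs p W Y T (Finset.Iio_insert i) (Ioi i),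
    fun i => condEnt_right_partialObs p W Y T (Iio i) (Finset.Ioi_insert i),
    condEnt_left_eq_sub p W Y T, condEnt_right_eq_sub p W Y T, Finset.sum_sub_distrib] at h ⊢
  linarith

lemma sum_condEnt_le_condEnt {p : Ω → ℝ} (hp : ∀ ω, 0 ≤ p ω) (W : Ω → δ) (Y : Ω → Fin n → β)
    (T : Ω → Fin n → τ) :
    ∑ i, condEnt p (fun ω => T ω i) (partialObs W Y T (Iio i) (Ioi i)) ≤ condEnt p T W := by
  have drop_left : ∀ s t, (partialObs W Y T ∅ t).FactorsThrough (partialObs W Y T s t) :=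
    fun s t ω ω' h => by
      obtain ⟨hW, -, hT⟩ := partialObs_eq_iff.mp h
      exact partialObs_eq_iff.mpr ⟨hW, by simp, hT⟩
  calc _ ≤ ∑ i, condEnt p (fun ω => T ω i) (partialObs W Y T ∅ (Ioi i)) :=
        Finset.sum_le_sum fun i _ => condEnt_le_condEnt_of_factorsThrough hp _ (drop_left _ _)
    _ = ∑ i, (ent p (partialObs W Y T ∅ (Ici i)) - ent p (partialObs W Y T ∅ (Ioi i))) := by
        simp only [fun i => condEnt_right_partialObs p W Y T ∅ (Finset.Ioi_insert i)]
    _ = condEnt p T W := by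
        rw [sum_cut_sub_cut fun _ t => ent p (partialObs W Y T ∅ t), condEnt_right_eq_sub p W Y T]

end CsiszarSum

section ChannelOutput

variable {α γ δ ζ : Type*}

/-- `Z` is the output of the channel `κ` with input `X`, conditionally independent of `U` given `X`:
`p(u, x, z) = p(u, x) κ(z|x)`. -/
def IsChannelOutput (p : Ω → ℝ) (U : Ω → γ) (X : Ω → α) (Z : Ω → ζ) (κ : α → ζ → ℝ) : Prop :=
  ∀ u x z, pr p (fun ω => (U ω, X ω, Z ω)) (u, x, z) = pr p (fun ω => (U ω, X ω)) (u, x) * κ x z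

lemma IsChannelOutput.comp_left {p : Ω → ℝ} {U : Ω → γ} {X : Ω → α} {Z : Ω → ζ} {κ : α → ζ → ℝ}
    (h : IsChannelOutput p U X Z κ) {f : γ → δ} (hf : Function.Injective f) :
    IsChannelOutput p (fun ω => f (U ω)) X Z κ := by
  intro v x z
  by_cases hv : ∃ u, f u = v
  · obtain ⟨u, rfl⟩ := hv
    simpa only [pr, Prod.mk.injEq, hf.eq_iff] using h u x z
  · have hne : ∀ ω, f (U ω) ≠ v := fun ω hω => hv ⟨U ω, hω⟩
    simp [pr, hne]

lemma IsChannelOutput.exists_pr_eq [Fintype γ] [Fintype α] {p : Ω → ℝ}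
    (hp : IsPMF p) {U : Ω → γ} {X : Ω → α} {Z : Ω → ζ} {κ : α → ζ → ℝ}
    (h : IsChannelOutput p U X Z κ) :
    ∃ (q : γ → ℝ) (k : γ → α → ℝ), IsPMF q ∧ IsKernel k ∧
      pr p (fun ω => (U ω, X ω, Z ω)) = fun v => q v.1 * k v.1 v.2.1 * κ v.2.1 v.2.2 := by
  have : Nonempty α := hp.nonempty.map X
  obtain ⟨k, hk, hmul⟩ := exists_isKernel_pr_eq_mul hp.1 U X
  refine ⟨pr p U, k, isPMF_pr hp U, hk, ?_⟩
  funext ⟨u, x, z⟩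
  rw [h u x z, hmul]

end ChannelOutput

section TimeSharing

variable {ι α β γ ζ : Type*} [Fintype ι]

/-- The law on `ι × Ω` of a time-sharing index of law `c` together with an independent outcome
of law `p`. -/
def timeShare (c : ι → ℝ) (p : Ω → ℝ) : ι × Ω → ℝ := fun v => c v.1 * p v.2

lemma isPMF_timeShare {c : ι → ℝ} {p : Ω → ℝ} (hc : IsPMF c) (hp : IsPMF p) :
    IsPMF (timeShare c p) :=
  ⟨fun v => mul_nonneg (hc.1 _) (hp.1 _), by
    simp [timeShare, Fintype.sum_prod_type, ← Finset.mul_sum, hc.2, hp.2]⟩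

lemma pr_timeShare (c : ι → ℝ) (p : Ω → ℝ) (V : ι × Ω → α) (a : α) :
    pr (timeShare c p) V a = ∑ i, c i * pr p (fun ω => V (i, ω)) a := by
  simp [pr, timeShare, Fintype.sum_prod_type, Finset.mul_sum]

lemma IsChannelOutput.timeShare (c : ι → ℝ) {p : Ω → ℝ} {U : ι × Ω → γ} {X : ι × Ω → α}
    {Z : ι × Ω → ζ} {κ : α → ζ → ℝ}
    (h : ∀ i, IsChannelOutput p (fun ω => U (i, ω)) (fun ω => X (i, ω)) (fun ω => Z (i, ω)) κ) :
    IsChannelOutput (timeShare c p) U X Z κ := by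
  intro u x z
  simp only [pr_timeShare, fun i => h i u x z, ← mul_assoc, Finset.sum_mul]

lemma pr_timeShare_apply (c : ι → ℝ) (p : Ω → ℝ) {V : ι × Ω → α}
    (hV : Prod.fst.FactorsThrough V) (i : ι) (ω : Ω) :
    pr (timeShare c p) V (V (i, ω)) = c i * pr p (fun ω => V (i, ω)) (V (i, ω)) := by
  rw [pr_timeShare, Finset.sum_eq_single i _ (by simp)]
  intro j _ hj
  have hne : ∀ ω', V (j, ω') ≠ V (i, ω) := fun ω' h => hj (hV h)
  simp [pr, hne]

lemma ent_timeShare [Fintype α] (c : ι → ℝ) {p : Ω → ℝ} (hp : IsPMF p) {V : ι × Ω → α}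
    (hV : Prod.fst.FactorsThrough V) :
    ent (timeShare c p) V =
      ∑ i, c i * ent p (fun ω => V (i, ω)) - ∑ i, c i * Real.logb 2 (c i) := by
  have pointwise : ∀ i ω, timeShare c p (i, ω) * -Real.logb 2 (pr (timeShare c p) V (V (i, ω))) =
      c i * (p ω * -Real.logb 2 (pr p (fun ω => V (i, ω)) (V (i, ω)))) -
        c i * Real.logb 2 (c i) * p ω := fun i ω => by
    rcases eq_or_ne (c i) 0 with hc | hc
    · simp [timeShare, hc]
    rcases (hp.1 ω).eq_or_lt with hω | hω
    · simp [timeShare, ← hω]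
    have hpr := hω.trans_le (le_pr_apply hp.1 (fun ω => V (i, ω)) ω)
    rw [pr_timeShare_apply c p hV, Real.logb_mul hc hpr.ne', timeShare]
    ring
  simp only [ent_eq_sum_outcomes, Fintype.sum_prod_type, pointwise, Finset.sum_sub_distrib,
    ← Finset.mul_sum, hp.2, mul_one]

lemma condEnt_timeShare [Fintype α] [Fintype β] (c : ι → ℝ) {p : Ω → ℝ} (hp : IsPMF p)
    (R : ι × Ω → β) {V : ι × Ω → α} (hV : Prod.fst.FactorsThrough V) :
    condEnt (timeShare c p) R V =
      ∑ i, c i * condEnt p (fun ω => R (i, ω)) fun ω => V (i, ω) := by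
  have hRV : Prod.fst.FactorsThrough fun v => (R v, V v) := fun _ _ h => hV (Prod.mk.inj h).2
  simp only [condEnt, ent_timeShare c hp hV, ent_timeShare c hp hRV, mul_sub,
    Finset.sum_sub_distrib]
  ring

lemma condEnt_timeShare_sigma {A : ι → Type*} [∀ i, Fintype (A i)] [Fintype β] [Fintype γ]
    (c : ι → ℝ) {p : Ω → ℝ} (hp : IsPMF p) (R : ι × Ω → β) (U : ∀ i, Ω → A i)
    {e : (Σ i, A i) → γ} (he : Function.Injective e) :
    condEnt (timeShare c p) R (fun v => e ⟨v.1, U v.1 v.2⟩) =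
      ∑ i, c i * condEnt p (fun ω => R (i, ω)) (U i) := by
  rw [condEnt_timeShare c hp R fun _ _ h => congrArg Sigma.fst (he h)]
  exact Finset.sum_congr rfl fun i _ => congrArg (c i * ·)
    (condEnt_comp_injective p _ (U i) (he.comp sigma_mk_injective))

end TimeSharing

section MemorylessLaw

variable {ι α β ζ δ γ τ : Type*} [Fintype ι]

lemma sum_ite_apply_eq_mul_prod [DecidableEq ι] [Fintype ζ] {k : ι → ζ → ℝ} {i : ι}
    (hk : ∑ b, k i b = 1) {f : (ι → ζ) → ℝ} (hf : ∀ z b, f (Function.update z i b) = f z) (b : ζ) :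
    ∑ z, (if z i = b then f z * ∏ j, k j (z j) else 0) = (∑ z, f z * ∏ j, k j (z j)) * k i b := by
  let e := (Equiv.funSplitAt i ζ).symm
  let g : ({j // j ≠ i} → ζ) → ℝ := fun r => f (e (b, r)) * ∏ j : {j // j ≠ i}, k j (r j)
  have e_apply_self : ∀ a r, e (a, r) i = a := fun a r => by simp [e]
  have f_mul_prod : ∀ a r, f (e (a, r)) * ∏ j, k j (e (a, r) j) = k i a * g r := fun a r => by
    have he : e (a, r) = Function.update (e (b, r)) i a := by
      ext j
      by_cases h : j = i
      · subst h
        simp [e]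
      · simp [e, h]
    have hprod : ∏ j : {j // j ≠ i}, k j (e (a, r) j) = ∏ j : {j // j ≠ i}, k j (r j) :=
      Finset.prod_congr rfl fun j _ => by simp [e, j.2]
    rw [Fintype.prod_eq_mul_prod_subtype_ne _ i, hprod, e_apply_self, he, hf]
    ring
  calc _ = ∑ a, ∑ r, if a = b then k i a * g r else 0 := by
        rw [← e.sum_comp, Fintype.sum_prod_type]
        simp only [e_apply_self, f_mul_prod]
    _ = (∑ a, ∑ r, k i a * g r) * k i b := by
        simp only [← Finset.mul_sum, ← Finset.sum_mul, hk, Finset.sum_ite_irrel,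
          Finset.sum_const_zero]
        simp [mul_comm]
    _ = _ := by
        rw [← e.sum_comp, Fintype.sum_prod_type]
        simp only [f_mul_prod]

lemma sum_prod_apply_eq_one [DecidableEq ι] [Fintype ζ] {k : ι → ζ → ℝ}
    (hk : ∀ i, ∑ b, k i b = 1) : ∑ z : ι → ζ, ∏ i, k i (z i) = 1 := by
  simpa [hk] using (Finset.prod_univ_sum (fun _ => Finset.univ) k).symm

/-- The joint law of `(W, X^n, Z^n)`, where `(W, X^n)` has law `μ` and `Z^n` is the output of the
memoryless channel `κ` applied componentwise to `X^n`. -/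
def memorylessLaw (κ : α → ζ → ℝ) (μ : δ × (ι → α) → ℝ) : δ × (ι → α) × (ι → ζ) → ℝ :=
  fun ω => μ (ω.1, ω.2.1) * ∏ i, κ (ω.2.1 i) (ω.2.2 i)

variable [DecidableEq ι] [Fintype α] [Fintype ζ] [Fintype δ] {κ : α → ζ → ℝ}

lemma isPMF_memorylessLaw (hκ : IsKernel κ) {μ : δ × (ι → α) → ℝ} (hμ : IsPMF μ) :
    IsPMF (memorylessLaw κ μ) := by
  refine ⟨fun ω => mul_nonneg (hμ.1 _) (Finset.prod_nonneg fun i _ => (hκ _).1 _), ?_⟩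
  simp only [memorylessLaw, Fintype.sum_prod_type, ← Finset.mul_sum,
    fun x : ι → α => sum_prod_apply_eq_one (k := fun i => κ (x i)) fun i => (hκ (x i)).2, mul_one]
  rw [← Fintype.sum_prod_type, hμ.2]

lemma isChannelOutput_memorylessLaw (hκ : IsKernel κ) (μ : δ × (ι → α) → ℝ) (i : ι)
    {U : δ × (ι → α) × (ι → ζ) → γ}
    (hU : ∀ w x z b, U (w, x, Function.update z i b) = U (w, x, z)) :
    IsChannelOutput (memorylessLaw κ μ) U (fun ω => ω.2.1 i) (fun ω => ω.2.2 i) κ := by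
  intro u a b
  simp only [pr, Fintype.sum_prod_type, Finset.sum_mul, memorylessLaw]
  refine Finset.sum_congr rfl fun w _ => Finset.sum_congr rfl fun x _ => ?_
  have h := sum_ite_apply_eq_mul_prod (k := fun j => κ (x j)) (i := i) (hκ (x i)).2
    (f := fun z => if U (w, x, z) = u ∧ x i = a then μ (w, x) else 0)
    (fun z c => by simp only [hU]) b
  rcases eq_or_ne (x i) a with rfl | hx
  · simpa [ite_and, ← ite_and, and_comm, Finset.sum_mul] using h
  · simp [hx]

lemma isChannelOutput_memorylessLaw_partialObs (hκ : IsKernel κ) (μ : δ × (ι → α) → ℝ) (Y : ζ → β)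
    (T : ζ → τ) {s t : Finset ι} {i : ι} (hs : i ∉ s) (ht : i ∉ t) :
    IsChannelOutput (memorylessLaw κ μ)
      (partialObs (fun ω => ω.1) (fun ω j => Y (ω.2.2 j)) (fun ω j => T (ω.2.2 j)) s t)
      (fun ω => ω.2.1 i) (fun ω => ω.2.2 i) κ := by
  refine isChannelOutput_memorylessLaw hκ μ i fun w x z b => partialObs_eq_iff.mpr ⟨rfl, ?_, ?_⟩
  · intro j hj
    simp only [Function.update_of_ne (ne_of_mem_of_not_mem hj hs)]
  · intro j hj
    simp only [Function.update_of_ne (ne_of_mem_of_not_mem hj ht)]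

end MemorylessLaw

lemma IsKernel.prod {α β τ : Type*} [Fintype β] [Fintype τ] {k : α → β → ℝ} {l : α → τ → ℝ}
    (hk : IsKernel k) (hl : IsKernel l) : IsKernel fun x (z : β × τ) => k x z.1 * l x z.2 :=
  fun x => ⟨fun z => mul_nonneg ((hk x).1 z.1) ((hl x).1 z.2), by
    simp [Fintype.sum_prod_type, ← Finset.mul_sum, (hk x).2, (hl x).2]⟩

lemma jointYT_eq_pr (ch1 : X1 → Y1 → ℝ) (v2 : X1 → T → ℝ) (n : ℕ)
    (μ : Wt × (Fin n → X1) → ℝ) :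
    jointYT ch1 v2 n μ = pr (memorylessLaw (fun x (z : Y1 × T) => ch1 x z.1 * v2 x z.2) μ)
      fun ω => (ω.1, ω.2.1, fun i => (ω.2.2 i).1, fun i => (ω.2.2 i).2) := by
  have split_injective : Function.Injective fun ω : Wt × (Fin n → X1) × (Fin n → Y1 × T) =>
      (ω.1, ω.2.1, (fun i => (ω.2.2 i).1), fun i => (ω.2.2 i).2) := by
    rintro ⟨w, x, z⟩ ⟨w', x', z'⟩ h
    simp only [Prod.mk.injEq, funext_iff] at h ⊢
    exact ⟨h.1, h.2.1, fun i => Prod.ext (h.2.2.1 i) (h.2.2.2 i)⟩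
  funext ⟨w, x, y, t⟩
  rw [pr_apply_of_injective _ split_injective (w, x, fun i => (y i, t i))]
  simp only [jointYT, memorylessLaw, Finset.prod_mul_distrib, mul_assoc]

theorem stmt15_general {α β τ δ : Type*} [Fintype α] [Fintype β] [Fintype τ] [Fintype δ] {n : ℕ}
    (hn : 0 < n) {p : Ω → ℝ} (hp : IsPMF p) (W : Ω → δ) (X : Ω → Fin n → α) (Y : Ω → Fin n → β)
    (T : Ω → Fin n → τ) (κ : α → β × τ → ℝ)
    (hκ : ∀ i, IsChannelOutput p (partialObs W Y T (Iio i) (Ioi i)) (fun ω => X ω i)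
      (fun ω => (Y ω i, T ω i)) κ) :
    ∃ (m : ℕ) (pW : Fin m → ℝ) (k : Fin m → α → ℝ) (γ : ℝ),
      IsPMF pW ∧ (∀ w, IsPMF (k w)) ∧ 0 ≤ γ ∧
      (let p1 : Fin m × α × β × τ → ℝ := fun ω => pW ω.1 * k ω.1 ω.2.1 * κ ω.2.1 ω.2.2
       (1 / (n : ℝ)) * condEnt p T W = condEnt p1 (fun ω => ω.2.2.2) (fun ω => ω.1) + γ ∧
       (1 / (n : ℝ)) * condEnt p Y W = condEnt p1 (fun ω => ω.2.2.1) (fun ω => ω.1) + γ) := by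
  let U := fun i => partialObs W Y T (Iio i) (Ioi i)
  let e := Fintype.equivFin (Σ i : Fin n, δ × (Iio i → β) × (Ioi i → τ))
  let c : Fin n → ℝ := fun _ => 1 / n
  have hc : IsPMF c := ⟨fun _ => by positivity, by simp [c, hn.ne']⟩
  have embed : ∀ i, Function.Injective fun a => e ⟨i, a⟩ := fun i =>
    e.injective.comp sigma_mk_injective
  have hV : IsChannelOutput (timeShare c p) (fun v => e ⟨v.1, U v.1 v.2⟩) (fun v => X v.2 v.1)
      (fun v => (Y v.2 v.1, T v.2 v.1)) κ :=
    IsChannelOutput.timeShare c fun i => (hκ i).comp_left (embed i)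
  obtain ⟨pW, k, hpW, hk, hlaw⟩ := hV.exists_pr_eq (isPMF_timeShare hc hp)
  refine ⟨_, pW, k, 1 / n * (condEnt p T W - ∑ i, condEnt p (fun ω => T ω i) (U i)), hpW, hk,
    mul_nonneg (by positivity) (sub_nonneg.mpr (sum_condEnt_le_condEnt hp.1 W Y T)), ?_⟩
  intro p1
  have law_p1 : p1 = _ := hlaw.symm
  have hT : condEnt p1 (fun ω => ω.2.2.2) (fun ω => ω.1) =
      1 / n * ∑ i, condEnt p (fun ω => T ω i) (U i) := by
    rw [law_p1, condEnt_pr, condEnt_timeShare_sigma c hp _ U e.injective, Finset.mul_sum]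
  have hY : condEnt p1 (fun ω => ω.2.2.1) (fun ω => ω.1) =
      1 / n * ∑ i, condEnt p (fun ω => Y ω i) (U i) := by
    rw [law_p1, condEnt_pr, condEnt_timeShare_sigma c hp _ U e.injective, Finset.mul_sum]
  refine ⟨by rw [hT]; ring, ?_⟩
  rw [hY, condEnt_sub_sum_condEnt_eq p W Y T]
  ring

theorem stmt15 (ch1 : X1 → Y1 → ℝ) (v2 : X1 → T → ℝ)
    (hch1 : IsKernel ch1) (hv2 : IsKernel v2)
    (n : ℕ) (hn : 0 < n) (μ : Wt × (Fin n → X1) → ℝ) (hμ : IsPMF μ) :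
    ∃ (m : ℕ) (pW : Fin m → ℝ) (k : Fin m → X1 → ℝ) (γ : ℝ),
      IsPMF pW ∧ (∀ w, IsPMF (k w)) ∧ 0 ≤ γ ∧
      (let p := jointYT ch1 v2 n μ
       let vWn := fun (ω : Wt × (Fin n → X1) × (Fin n → Y1) × (Fin n → T)) => ω.1
       let vY1n := fun (ω : Wt × (Fin n → X1) × (Fin n → Y1) × (Fin n → T)) => ω.2.2.1
       let vTn := fun (ω : Wt × (Fin n → X1) × (Fin n → Y1) × (Fin n → T)) => ω.2.2.2
       let p1 : Fin m × X1 × Y1 × T → ℝ :=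
         fun (w, x1, y1, t) => pW w * k w x1 * ch1 x1 y1 * v2 x1 t
       let vW := fun (ω : Fin m × X1 × Y1 × T) => ω.1
       let vY1 := fun (ω : Fin m × X1 × Y1 × T) => ω.2.2.1
       let vT := fun (ω : Fin m × X1 × Y1 × T) => ω.2.2.2
       (1 / (n : ℝ)) * condEnt p vTn vWn = condEnt p1 vT vW + γ ∧
       (1 / (n : ℝ)) * condEnt p vY1n vWn = condEnt p1 vY1 vW + γ) := by
  simpa only [jointYT_eq_pr, condEnt_pr, mul_assoc] using
    stmt15_general hn (isPMF_memorylessLaw (hch1.prod hv2) hμ) (fun ω => ω.1) (fun ω => ω.2.1)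
      (fun ω i => (ω.2.2 i).1) (fun ω i => (ω.2.2 i).2) _ fun i =>
        isChannelOutput_memorylessLaw_partialObs (hch1.prod hv2) μ Prod.fst Prod.snd
          (by simp) (by simp)

end Stmt15

end Paper
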